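/- Uniform-in-x bound on Λ Γ of the Black–Scholes price (deterministic case n = 1 of the key estimate used in the error bounds): for every 0 ≤ t < T, every x ∈ ℝ and every y > 0, | ∂_x (∂²_{xx} − ∂_x) BS(t,x,y) | = (e^x/(y√(2πτ))) exp(−d₊²/2) · |1 − d₊/(y√τ)| ≤ K e^{−rτ} e^{−1/2} / ( √(2π) · y² τ ), where τ = T − t and d₊ = (x − log K + (r + y²/2)τ)/(y√τ). In particular the bound does not depend on x. -/

import Mathlib

/-!
Differentiating the Black–Scholes price in the log spot `x`, the two terms carrying the normal
density `φ` cancel because `e^x φ(d₊) = K e^{-rτ} φ(d₋)`. Hence `Λ BS = e^x Φ(d₊)`,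
`Γ BS = e^x φ(d₊) / (y √τ)`, and one more derivative yields the factor `1 - d₊ / (y √τ)`.
This factor equals `-d₋ / (y √τ)`, so the same cancellation rewrites `|Λ Γ BS|` as
`K e^{-rτ} |d₋| φ(d₋) / (y² τ)`, and `|z| φ(z)` is maximal at `|z| = 1`.
-/

open Real MeasureTheory

/-- Standard normal cumulative distribution function. -/
noncomputable def stdNormalCDF (x : ℝ) : ℝ :=
  ∫ t in Set.Iic x, (Real.sqrt (2 * Real.pi))⁻¹ * Real.exp (-t ^ 2 / 2)

/-- d₊ in the Black–Scholes formula. -/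
noncomputable def dPlus (T K r t x y : ℝ) : ℝ :=
  (x - Real.log K + (r + y ^ 2 / 2) * (T - t)) / (y * Real.sqrt (T - t))

/-- d₋ in the Black–Scholes formula. -/
noncomputable def dMinus (T K r t x y : ℝ) : ℝ :=
  (x - Real.log K + (r - y ^ 2 / 2) * (T - t)) / (y * Real.sqrt (T - t))

/-- Black–Scholes call price with maturity `T`, strike `K`, interest rate `r`,
current time `t`, log spot price `x` and volatility `y`. -/
noncomputable def BS (T K r t x y : ℝ) : ℝ :=
  Real.exp x * stdNormalCDF (dPlus T K r t x y)
    - K * Real.exp (-r * (T - t)) * stdNormalCDF (dMinus T K r t x y)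

/-- The operator Γ := ∂²ₓₓ − ∂ₓ acting on functions of the log spot price. -/
noncomputable def GammaOp (f : ℝ → ℝ) : ℝ → ℝ :=
  fun x => deriv (deriv f) x - deriv f x

open ProbabilityTheory Set Filter
open scoped NNReal Topology

theorem hasDerivAt_integral_Iic {E : Type*} [NormedAddCommGroup E] [NormedSpace ℝ E]
    [CompleteSpace E] {f : ℝ → E} {a : ℝ} (hf : IntegrableOn f (Iic a))
    (hmeas : StronglyMeasurableAtFilter f (𝓝 a)) (hcont : ContinuousAt f a) :
    HasDerivAt (fun u => ∫ x in Iic u, f x) (f a) a := by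
  obtain ⟨s, hs, hfs⟩ := hcont.integrableAtFilter hmeas (volume.finiteAt_nhds a)
  obtain ⟨l, u, ha, hlu⟩ := mem_nhds_iff_exists_Ioo_subset.mp hs
  have hf_Iic {v : ℝ} (hv : v ∈ Ioo l u) : IntegrableOn f (Iic v) := by
    refine (hf.union (hfs.mono_set hlu)).mono_set fun x hx => ?_
    exact (le_or_gt x a).imp id fun hax => ⟨ha.1.trans hax, hx.trans_lt hv.2⟩
  have hFTC : HasDerivAt (fun v => (∫ x in Iic a, f x) + ∫ x in a..v, f x) (f a) a :=
    (intervalIntegral.integral_hasDerivAt_right IntervalIntegrable.refl hmeas hcont).const_add _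
  refine hFTC.congr_of_eventuallyEq ?_
  filter_upwards [Ioo_mem_nhds ha.1 ha.2] with v hv
  rw [← intervalIntegral.integral_Iic_sub_Iic hf (hf_Iic hv), add_sub_cancel]

theorem hasDerivAt_gaussianPDFReal (μ : ℝ) (v : ℝ≥0) (x : ℝ) :
    HasDerivAt (gaussianPDFReal μ v) (-((x - μ) / v) * gaussianPDFReal μ v x) x := by
  have hexponent : HasDerivAt (fun u => -(u - μ) ^ 2 / (2 * v)) (-((x - μ) / v)) x := by
    refine ((((hasDerivAt_id x).sub_const μ).pow 2).neg.div_const (2 * (v : ℝ))).congr_deriv ?_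
    simp only [id_eq]
    field_simp
    ring
  refine (hexponent.exp.const_mul (√(2 * π * v))⁻¹).congr_deriv ?_
  rw [gaussianPDFReal]
  ring

theorem abs_mul_exp_neg_sq_div_two_le (x : ℝ) : |x| * exp (-x ^ 2 / 2) ≤ exp (-1 / 2) := by
  refine (pow_le_pow_iff_left₀ (by positivity) (by positivity) two_ne_zero).mp ?_
  calc (|x| * exp (-x ^ 2 / 2)) ^ 2 = x ^ 2 * exp (-x ^ 2) := by
        rw [mul_pow, sq_abs, ← exp_nat_mul]
        ring_nf
    _ ≤ exp (-1) := mul_exp_neg_le_exp_neg_one (x ^ 2)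
    _ = exp (-1 / 2) ^ 2 := by
        rw [← exp_nat_mul]
        norm_num

theorem abs_sub_mul_gaussianPDFReal_le (μ : ℝ) (v : ℝ≥0) (x : ℝ) :
    |x - μ| * gaussianPDFReal μ v x ≤ exp (-1 / 2) / √(2 * π) := by
  rcases eq_or_ne v 0 with rfl | hv
  · simp only [gaussianPDFReal_zero_var, Pi.zero_apply, mul_zero]
    positivity
  have hv_pos : (0 : ℝ) < v := NNReal.coe_pos.mpr (pos_iff_ne_zero.mpr hv)
  have hstandardize : |x - μ| * gaussianPDFReal μ v x
      = |(x - μ) / √v| * exp (-((x - μ) / √v) ^ 2 / 2) / √(2 * π) := by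
    rw [gaussianPDFReal, abs_div, abs_of_pos (sqrt_pos.mpr hv_pos), div_pow, sq_sqrt hv_pos.le,
      sqrt_mul (by positivity)]
    field_simp
  rw [hstandardize]
  gcongr
  exact abs_mul_exp_neg_sq_div_two_le _

theorem gaussianPDFReal_zero_one (x : ℝ) :
    gaussianPDFReal 0 1 x = (√(2 * π))⁻¹ * exp (-x ^ 2 / 2) := by
  simp [gaussianPDFReal]

theorem hasDerivAt_stdNormalCDF (x : ℝ) : HasDerivAt stdNormalCDF (gaussianPDFReal 0 1 x) x := by
  have hcdf : stdNormalCDF = fun u => ∫ s in Iic u, gaussianPDFReal 0 1 s := by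
    simp only [gaussianPDFReal_zero_one]
    rfl
  rw [hcdf]
  exact hasDerivAt_integral_Iic (integrable_gaussianPDFReal 0 1).integrableOn
    (stronglyMeasurable_gaussianPDFReal 0 1).stronglyMeasurableAtFilter
    (hasDerivAt_gaussianPDFReal 0 1 x).continuousAt

section BlackScholes

theorem hasDerivAt_dPlus (T K r t x y : ℝ) :
    HasDerivAt (fun u => dPlus T K r t u y) (y * √(T - t))⁻¹ x := by
  rw [← one_div]
  exact (((hasDerivAt_id x).sub_const _).add_const _).div_const _

theorem hasDerivAt_dMinus (T K r t x y : ℝ) :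
    HasDerivAt (fun u => dMinus T K r t u y) (y * √(T - t))⁻¹ x := by
  rw [← one_div]
  exact (((hasDerivAt_id x).sub_const _).add_const _).div_const _

theorem hasDerivAt_exp_mul_stdNormalCDF_dPlus (T K r t x y : ℝ) :
    HasDerivAt (fun u => exp u * stdNormalCDF (dPlus T K r t u y))
      (exp x * stdNormalCDF (dPlus T K r t x y)
        + exp x * gaussianPDFReal 0 1 (dPlus T K r t x y) / (y * √(T - t))) x := by
  refine ((hasDerivAt_exp x).mul
    ((hasDerivAt_stdNormalCDF _).comp x (hasDerivAt_dPlus T K r t x y))).congr_deriv ?_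
  rw [Function.comp_apply]
  ring

variable {T K t y : ℝ}

theorem mul_sqrt_sub_ne_zero (ht : t < T) (hy : y ≠ 0) : y * √(T - t) ≠ 0 :=
  mul_ne_zero hy (sqrt_ne_zero'.mpr (sub_pos.mpr ht))

theorem mul_sqrt_sub_sq (ht : t < T) (y : ℝ) : (y * √(T - t)) ^ 2 = y ^ 2 * (T - t) := by
  rw [mul_pow, sq_sqrt (sub_pos.mpr ht).le]

theorem dMinus_eq_dPlus_sub (ht : t < T) (hy : y ≠ 0) (K r x : ℝ) :
    dMinus T K r t x y = dPlus T K r t x y - y * √(T - t) := by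
  rw [dMinus, dPlus, div_sub' (mul_sqrt_sub_ne_zero ht hy)]
  congr 1
  linear_combination mul_sqrt_sub_sq ht y

theorem dPlus_sq_sub_dMinus_sq (ht : t < T) (hy : y ≠ 0) (K r x : ℝ) :
    dPlus T K r t x y ^ 2 - dMinus T K r t x y ^ 2 = 2 * (x - log K + r * (T - t)) := by
  have hdPlus : dPlus T K r t x y * (y * √(T - t))
      = x - log K + (r + y ^ 2 / 2) * (T - t) :=
    div_mul_cancel₀ _ (mul_sqrt_sub_ne_zero ht hy)
  rw [dMinus_eq_dPlus_sub ht hy]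
  linear_combination 2 * hdPlus - mul_sqrt_sub_sq ht y

theorem exp_mul_gaussianPDFReal_dPlus (hK : 0 < K) (ht : t < T) (hy : y ≠ 0) (r x : ℝ) :
    exp x * gaussianPDFReal 0 1 (dPlus T K r t x y)
      = K * exp (-r * (T - t)) * gaussianPDFReal 0 1 (dMinus T K r t x y) := by
  have hexponent : x + -dPlus T K r t x y ^ 2 / 2
      = log K + -r * (T - t) + -dMinus T K r t x y ^ 2 / 2 := by
    linear_combination -(1 / 2 : ℝ) * dPlus_sq_sub_dMinus_sq ht hy K r x
  have hexp := congrArg exp hexponent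
  rw [exp_add, exp_add, exp_add, exp_log hK] at hexp
  rw [gaussianPDFReal_zero_one, gaussianPDFReal_zero_one]
  linear_combination (√(2 * π))⁻¹ * hexp

theorem hasDerivAt_BS (hK : 0 < K) (ht : t < T) (hy : y ≠ 0) (r x : ℝ) :
    HasDerivAt (fun u => BS T K r t u y) (exp x * stdNormalCDF (dPlus T K r t x y)) x := by
  have hbond := ((hasDerivAt_stdNormalCDF _).comp x (hasDerivAt_dMinus T K r t x y)).const_mul
    (K * exp (-r * (T - t)))
  refine ((hasDerivAt_exp_mul_stdNormalCDF_dPlus T K r t x y).sub hbond).congr_deriv ?_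
  linear_combination (y * √(T - t))⁻¹ * exp_mul_gaussianPDFReal_dPlus hK ht hy r x

theorem GammaOp_BS (hK : 0 < K) (ht : t < T) (hy : y ≠ 0) (r : ℝ) :
    GammaOp (fun x => BS T K r t x y)
      = fun x => exp x * gaussianPDFReal 0 1 (dPlus T K r t x y) / (y * √(T - t)) := by
  have hderiv : deriv (fun x => BS T K r t x y)
      = fun x => exp x * stdNormalCDF (dPlus T K r t x y) :=
    funext fun x => (hasDerivAt_BS hK ht hy r x).deriv
  funext x
  rw [GammaOp, hderiv, (hasDerivAt_exp_mul_stdNormalCDF_dPlus T K r t x y).deriv,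
    add_sub_cancel_left]

theorem deriv_GammaOp_BS (hK : 0 < K) (ht : t < T) (hy : y ≠ 0) (r x : ℝ) :
    deriv (GammaOp fun u => BS T K r t u y) x
      = exp x * gaussianPDFReal 0 1 (dPlus T K r t x y) / (y * √(T - t))
        * (1 - dPlus T K r t x y / (y * √(T - t))) := by
  rw [GammaOp_BS hK ht hy]
  refine ((((hasDerivAt_exp x).mul ((hasDerivAt_gaussianPDFReal 0 1 _).comp x
    (hasDerivAt_dPlus T K r t x y))).div_const _).congr_deriv ?_).deriv
  simp only [Function.comp_apply, sub_zero, NNReal.coe_one, div_one]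
  ring

theorem deriv_GammaOp_BS_eq_dMinus (hK : 0 < K) (ht : t < T) (hy : y ≠ 0) (r x : ℝ) :
    deriv (GammaOp fun u => BS T K r t u y) x
      = -(K * exp (-r * (T - t)) / (y ^ 2 * (T - t))
        * (dMinus T K r t x y * gaussianPDFReal 0 1 (dMinus T K r t x y))) := by
  have hfactor : 1 - dPlus T K r t x y / (y * √(T - t))
      = -dMinus T K r t x y / (y * √(T - t)) := by
    rw [dMinus_eq_dPlus_sub ht hy, neg_sub, sub_div, div_self (mul_sqrt_sub_ne_zero ht hy)]
  rw [deriv_GammaOp_BS hK ht hy, exp_mul_gaussianPDFReal_dPlus hK ht hy, hfactor,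
    ← mul_sqrt_sub_sq ht]
  ring

end BlackScholes

/-- Uniform-in-x bound on Λ Γ of the Black–Scholes price:
|∂ₓ Γ BS(t,x,y)| = (e^x/(y√(2πτ)))e^{−d₊²/2}|1 − d₊/(y√τ)|
≤ K e^{−rτ} e^{−1/2}/(√(2π) y² τ). -/
theorem lambda_gamma_bs_bound (T K r : ℝ) (hT : 0 < T) (hK : 0 < K)
    (t x y : ℝ) (ht0 : 0 ≤ t) (htT : t < T) (hy : 0 < y) :
    |deriv (GammaOp (fun x' => BS T K r t x' y)) x|
        = Real.exp x / (y * Real.sqrt (2 * Real.pi * (T - t)))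
            * Real.exp (-(dPlus T K r t x y) ^ 2 / 2)
            * |1 - dPlus T K r t x y / (y * Real.sqrt (T - t))|
    ∧ |deriv (GammaOp (fun x' => BS T K r t x' y)) x|
        ≤ K * Real.exp (-r * (T - t)) * Real.exp (-(1 : ℝ) / 2)
            / (Real.sqrt (2 * Real.pi) * (y ^ 2 * (T - t))) := by
  constructor
  · have hs : 0 < y * √(T - t) := mul_pos hy (sqrt_pos.mpr (sub_pos.mpr htT))
    rw [deriv_GammaOp_BS hK htT hy.ne', abs_mul,
      abs_of_nonneg (div_nonneg (mul_nonneg (exp_pos x).le (gaussianPDFReal_nonneg _ _ _)) hs.le),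
      gaussianPDFReal_zero_one, sqrt_mul (by positivity) (T - t)]
    ring
  · have hτ : 0 < T - t := sub_pos.mpr htT
    have hmax := abs_sub_mul_gaussianPDFReal_le 0 1 (dMinus T K r t x y)
    rw [sub_zero] at hmax
    calc |deriv (GammaOp fun u => BS T K r t u y) x|
        = K * exp (-r * (T - t)) / (y ^ 2 * (T - t))
            * (|dMinus T K r t x y| * gaussianPDFReal 0 1 (dMinus T K r t x y)) := by
          rw [deriv_GammaOp_BS_eq_dMinus hK htT hy.ne', abs_neg, abs_mul, abs_mul,
            abs_of_nonneg (gaussianPDFReal_nonneg _ _ _), abs_of_pos (by positivity)]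
      _ ≤ K * exp (-r * (T - t)) / (y ^ 2 * (T - t)) * (exp (-1 / 2) / √(2 * π)) := by
          gcongr
      _ = K * exp (-r * (T - t)) * exp (-1 / 2) / (√(2 * π) * (y ^ 2 * (T - t))) := by
          rw [div_mul_div_comm, mul_comm (√(2 * π))]
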